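/- Let A = (λ_x · 1_S)_{x∈X} be a coin-tossing measurement on a state space S, where (λ_x)_{x∈X} is a probability distribution on a finite set X. Then A is α-intersubjective if and only if α ≤ max{2·max_x λ_x − 1, 0}. -/

import Mathlib

open Finset

/-- An effect on the state space `S`: an affine map taking values in `[0,1]` on `S`. -/
def IsEffect {V : Type*} [AddCommGroup V] [Module ℝ V] (S : Set V) (a : V →ᵃ[ℝ] ℝ) : Prop :=
  ∀ s ∈ S, 0 ≤ a s ∧ a s ≤ 1

/-- A finite-outcome measurement: a family of effects summing to the unit effect on `S`. -/
def IsMeasurement {V : Type*} [AddCommGroup V] [Module ℝ V] (S : Set V) {X : Type*} [Fintype X]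
    (A : X → (V →ᵃ[ℝ] ℝ)) : Prop :=
  (∀ x, IsEffect S (A x)) ∧ ∀ s ∈ S, ∑ x, A x s = 1

/-- A joint measurement of `A` and `B`: a measurement on `X × Y` whose marginals are `A`, `B`. -/
def IsJointMeasurement {V : Type*} [AddCommGroup V] [Module ℝ V] (S : Set V)
    {X Y : Type*} [Fintype X] [Fintype Y]
    (A : X → (V →ᵃ[ℝ] ℝ)) (B : Y → (V →ᵃ[ℝ] ℝ)) (C : X × Y → (V →ᵃ[ℝ] ℝ)) : Prop :=
  IsMeasurement S C ∧ (∀ x, ∀ s ∈ S, ∑ y, C (x, y) s = A x s) ∧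
    (∀ y, ∀ s ∈ S, ∑ x, C (x, y) s = B y s)

/-- `A` is `α`-intersubjective: every joint measurement of `A` with itself has diagonal
weight at least `α · 1_S`. -/
def Intersubjective {V : Type*} [AddCommGroup V] [Module ℝ V] (S : Set V) {X : Type*} [Fintype X]
    (α : ℝ) (A : X → (V →ᵃ[ℝ] ℝ)) : Prop :=
  ∀ C : X × X → (V →ᵃ[ℝ] ℝ), IsJointMeasurement S A A C → ∀ s ∈ S, α ≤ ∑ x, C (x, x) s

/-- `A` is `α`-sharp: for distinct outcomes `x ≠ x'`, any effect below both `A x` and `A x'`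
is below `(1 - α) · 1_S`. -/
def SharpMeasurement {V : Type*} [AddCommGroup V] [Module ℝ V] (S : Set V) {X : Type*} [Fintype X]
    (α : ℝ) (A : X → (V →ᵃ[ℝ] ℝ)) : Prop :=
  ∀ x x', x ≠ x' → ∀ b : V →ᵃ[ℝ] ℝ, IsEffect S b → (∀ s ∈ S, b s ≤ A x s) →
    (∀ s ∈ S, b s ≤ A x' s) → ∀ s ∈ S, b s ≤ 1 - α


/-- `c` is a coupling of the weights `l` with themselves. -/
def IsSelfCoupling {X : Type*} [Fintype X] (l : X → ℝ) (c : X → X → ℝ) : Prop :=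
  (∀ x y, 0 ≤ c x y) ∧ (∀ x, ∑ y, c x y = l x) ∧ ∀ y, ∑ x, c x y = l y

namespace IsSelfCoupling

variable {X : Type*} [Fintype X] {l : X → ℝ} {c : X → X → ℝ}

theorem le_left (hc : IsSelfCoupling l c) (x y : X) : c x y ≤ l x :=
  hc.2.1 x ▸ single_le_sum (f := c x) (fun y _ => hc.1 x y) (mem_univ y)

theorem two_mul_sub_sum_le_sum_diag (hc : IsSelfCoupling l c) (m : X) :
    2 * l m - ∑ x, l x ≤ ∑ x, c x x := by
  classical
  obtain ⟨hc0, hrow, hcol⟩ := hc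
  have hoff : ∑ y ∈ univ.erase m, c m y ≤ ∑ y ∈ univ.erase m, l y :=
    sum_le_sum fun y _ => hcol y ▸ single_le_sum (f := fun x => c x y)
      (fun x _ => hc0 x y) (mem_univ m)
  have hm := add_sum_erase univ (c m) (mem_univ m)
  have hl := add_sum_erase univ l (mem_univ m)
  have hdiag := single_le_sum (f := fun x => c x x) (fun x _ => hc0 x x) (mem_univ m)
  rw [hrow m] at hm
  linarith

/-- Mass on a diagonal entry `(x, x)` can be exchanged with mass on an entry `(u, v)` outside the
row and column of `x`, which lowers the total diagonal mass. -/
theorem exists_sum_diag_lt (hc : IsSelfCoupling l c) {x u v : X} (hu : u ≠ x) (hv : v ≠ x)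
    (hx : 0 < c x x) (huv : 0 < c u v) :
    ∃ c', IsSelfCoupling l c' ∧ ∑ a, c' a a < ∑ a, c a a := by
  classical
  obtain ⟨hc0, hrow, hcol⟩ := hc
  let δ : X → X → ℝ := fun a b => if a = b then 1 else 0
  have hδ (a : X) : ∑ b, δ a b = 1 := by simp [δ]
  obtain ⟨ε, hε, hεx, hεuv⟩ : ∃ ε : ℝ, 0 < ε ∧ ε ≤ c x x ∧ ε ≤ c u v :=
    ⟨_, lt_min hx huv, min_le_left _ _, min_le_right _ _⟩
  refine ⟨fun a b => c a b + ε * ((δ x a - δ u a) * (δ v b - δ x b)), ⟨?_, ?_, ?_⟩, ?_⟩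
  · intro a b
    have := hc0 a b
    clear hrow hcol hδ
    dsimp only [δ]
    split_ifs <;> grind
  · intro a
    simp only [sum_add_distrib, ← mul_sum, sum_sub_distrib, hδ, hrow]
    ring
  · intro b
    simp only [sum_add_distrib, ← mul_sum, ← sum_mul, sum_sub_distrib, hδ, hcol]
    ring
  · have hdiag : ∑ a, (δ x a - δ u a) * (δ v a - δ x a) ≤ -1 := by
      have h : ∑ a, (δ x a - δ u a) * (δ v a - δ x a) = δ v x - 1 - δ v u + δ x u := by
        simp only [δ, sub_mul, mul_sub, sum_sub_distrib, ite_mul, one_mul, zero_mul,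
          sum_ite_eq, mem_univ, if_true]
        ring
      rw [h]
      have : 0 ≤ δ v u := by dsimp only [δ]; split_ifs <;> norm_num
      simp only [δ, hv, hu.symm, if_false] at this ⊢
      linarith
    rw [sum_add_distrib, ← mul_sum]
    nlinarith

theorem sum_eq_two_mul_sub (hc : IsSelfCoupling l c) {x : X}
    (h : ∀ u v, u ≠ x → v ≠ x → c u v = 0) : ∑ a, l a = 2 * l x - c x x := by
  classical
  obtain ⟨-, hrow, hcol⟩ := hc
  have hoff : ∑ a ∈ univ.erase x, l a = ∑ a ∈ univ.erase x, c a x := by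
    refine sum_congr rfl fun a ha => ?_
    rw [← hrow a]
    exact sum_eq_single x (fun b _ hb => h a b (ne_of_mem_erase ha) hb) (by simp)
  have hl := add_sum_erase univ l (mem_univ x)
  have hx := add_sum_erase univ (fun a => c a x) (mem_univ x)
  rw [hcol x] at hx
  linarith

end IsSelfCoupling

theorem isCompact_setOf_isSelfCoupling {X : Type*} [Fintype X] (l : X → ℝ) :
    IsCompact {c | IsSelfCoupling l c} := by
  refine (isCompact_Icc (a := (0 : X → X → ℝ)) (b := fun x _ => l x)).of_isClosed_subset ?_
    fun c hc => ⟨hc.1, hc.le_left⟩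
  simp only [IsSelfCoupling, Set.ofPred_and, Set.ofPred_forall]
  refine ((isClosed_iInter fun x => isClosed_iInter fun y => ?_).inter
    ((isClosed_iInter fun x => ?_).inter (isClosed_iInter fun y => ?_)))
  · exact isClosed_le (by fun_prop) (by fun_prop)
  · exact isClosed_eq (by fun_prop) (by fun_prop)
  · exact isClosed_eq (by fun_prop) (by fun_prop)

theorem exists_isSelfCoupling_sum_diag_le {X : Type*} [Fintype X] {l : X → ℝ}
    (hl0 : ∀ x, 0 ≤ l x) (hl1 : ∑ x, l x = 1) {M : ℝ} (hM : ∀ x, l x ≤ M) :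
    ∃ c, IsSelfCoupling l c ∧ ∑ x, c x x ≤ max (2 * M - 1) 0 := by
  have hprod : IsSelfCoupling l fun x y => l x * l y :=
    ⟨fun x y => mul_nonneg (hl0 x) (hl0 y), fun x => by rw [← mul_sum, hl1, mul_one],
      fun y => by rw [← sum_mul, hl1, one_mul]⟩
  have hcont : Continuous fun c : X → X → ℝ => ∑ x, c x x := by fun_prop
  obtain ⟨c, hc, hmin⟩ := (isCompact_setOf_isSelfCoupling l).exists_isMinOn ⟨_, hprod⟩
    hcont.continuousOn
  refine ⟨c, hc, ?_⟩
  by_cases hdiag : ∀ x, c x x = 0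
  · simp [hdiag]
  push Not at hdiag
  obtain ⟨x, hx⟩ := hdiag
  have hoff : ∀ u v, u ≠ x → v ≠ x → c u v = 0 := by
    intro u v hu hv
    by_contra huv
    obtain ⟨c', hc', hlt⟩ := hc.exists_sum_diag_lt hu hv
      ((hc.1 x x).lt_of_ne' hx) ((hc.1 u v).lt_of_ne' huv)
    exact hlt.not_ge (hmin hc')
  have hsum : ∑ a, c a a = c x x :=
    sum_eq_single x (fun a _ ha => hoff a a ha ha) (by simp)
  have htotal := hc.sum_eq_two_mul_sub hoff
  have := hM x
  rw [hsum]
  exact le_max_of_le_left (by linarith)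

/-- a coin-tossing measurement `(λ_x · 1_S)_x` is `α`-intersubjective iff
`α ≤ max {2 · max_x λ_x - 1, 0}`. -/
theorem coinTossing_intersubjective_iff {V : Type*} [NormedAddCommGroup V] [NormedSpace ℝ V]
    (S : Set V) (hSconv : Convex ℝ S) (hScomp : IsCompact S) (hSne : S.Nonempty)
    {X : Type*} [Fintype X] (l : X → ℝ) (hl0 : ∀ x, 0 ≤ l x) (hl1 : ∑ x, l x = 1)
    (M : ℝ) (hM : IsGreatest (Set.range l) M)
    (A : X → (V →ᵃ[ℝ] ℝ)) (hA : ∀ x, A x = AffineMap.const ℝ V (l x)) (α : ℝ) :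
    Intersubjective S α A ↔ α ≤ max (2 * M - 1) 0 := by
  constructor
  · intro h
    obtain ⟨s, hs⟩ := hSne
    obtain ⟨c, hc, hdiag⟩ :=
      exists_isSelfCoupling_sum_diag_le hl0 hl1 fun x => hM.2 (Set.mem_range_self x)
    have hle (x : X) : l x ≤ 1 := hl1 ▸ single_le_sum (fun y _ => hl0 y) (mem_univ x)
    have hjoint : IsJointMeasurement S A A fun p => AffineMap.const ℝ V (c p.1 p.2) := by
      refine ⟨⟨fun p s _ => ⟨hc.1 _ _, (hc.le_left _ _).trans (hle _)⟩, fun s _ => ?_⟩,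
        fun x s _ => ?_, fun y s _ => ?_⟩
      · simp [Fintype.sum_prod_type, hc.2.1, hl1]
      · simp [hA, hc.2.1]
      · simp [hA, hc.2.2]
    exact (h _ hjoint s hs).trans hdiag
  · rintro hα C ⟨⟨hC0, -⟩, hrow, hcol⟩ s hs
    obtain ⟨m, rfl⟩ := hM.1
    have hc : IsSelfCoupling l fun x y => C (x, y) s :=
      ⟨fun x y => (hC0 (x, y) s hs).1, fun x => by simp [hrow x s hs, hA],
        fun y => by simp [hcol y s hs, hA]⟩
    refine hα.trans (max_le ?_ (sum_nonneg fun x _ => hc.1 x x))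
    simpa only [hl1] using hc.two_mul_sub_sum_le_sum_diag m
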